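/- Let t ≥ 2, let T be an order-t tensor with all sides of size n, and let H be the walk hypergraph of a connected d-regular graph G on n vertices with adjacency-matrix second-largest eigenvalue in absolute value λ ∈ (0,d). Suppose we observe Z_e = T_e + ν_e for all hyperedges e ∈ E with (1/|E|)·Σ_{e∈E} ν_e² ≤ δ². Suppose T̂ is any order-t tensor satisfying (1/|E|)·Σ_{e∈E} (T̂_e − Z_e)² ≤ δ² and ‖T̂‖_max ≤ ‖T‖_max (e.g., T̂ minimizes the max-quasinorm subject to the root-mean-square data-fit constraint, for which T itself is feasible). Then (1/n^t)·‖T̂ − T‖_F² ≤ 2^t·(2t−3)·1.783^{t−1}·‖T‖_max²·(λ/d) + 4δ², where 1.783 is an upper bound on Grothendieck's constant over ℝ. -/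

import Mathlib

open Classical

/-- `‖U‖_{2,∞}`: the maximum ℓ2-norm of a row of `U`. -/
noncomputable def rowTwoInf {α : Type*} {r : ℕ} (U : α → Fin r → ℝ) : ℝ :=
  ⨆ a : α, Real.sqrt (∑ l, (U a l) ^ 2)

/-- The max-quasinorm of an order-`t` tensor. -/
noncomputable def maxQnorm {t : ℕ} {n : Fin t → ℕ}
    (T : ((i : Fin t) → Fin (n i)) → ℝ) : ℝ :=
  sInf { c : ℝ | ∃ (r : ℕ) (U : (i : Fin t) → Fin (n i) → Fin r → ℝ),
    (∀ x, T x = ∑ l : Fin r, ∏ i, U i (x i) l) ∧ c = ∏ i, rowTwoInf (U i) }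

/-- Hyperedges of the walk hypergraph of a graph `G`: a tuple
`(v 0, …, v (t-1))` is a hyperedge iff it is a walk of length `t-1` in `G`. -/
def walkEdge {t n : ℕ} (G : SimpleGraph (Fin n)) (v : Fin t → Fin n) : Prop :=
  ∀ i : Fin (t - 1),
    G.Adj (v ⟨(i : ℕ), by have := i.isLt; omega⟩)
      (v ⟨(i : ℕ) + 1, by have := i.isLt; omega⟩)

/-
The max-quasinorm is submultiplicative under entrywise products, since the row-wise Kronecker
products of two factorizations factor the entrywise product. So it suffices to show that the average
of a tensor `A` over the walks with `s` steps is within `s * (lam / d) * maxQnorm A` of its average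
over all tuples, and to apply this to the three terms of `(That - T) ^ 2`. For the averages, replace
one step of the walk at a time by a uniformly chosen vertex: by Cauchy–Schwarz over vertices and
columns together, each replacement costs at most `lam / d` times the product of the row norms,
because averaging along the walk does not increase row norms. Grothendieck's constant never enters.
-/

open scoped BigOperators Matrix

section RowNorm

variable {α : Type*} {r r' : ℕ}

lemma rowTwoInf_nonneg (U : α → Fin r → ℝ) : 0 ≤ rowTwoInf U :=
  Real.iSup_nonneg fun _ => Real.sqrt_nonneg _

lemma rowTwoInf_le {U : α → Fin r → ℝ} {c : ℝ} (hc : 0 ≤ c) (hU : ∀ a, ∑ l, U a l ^ 2 ≤ c ^ 2) :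
    rowTwoInf U ≤ c :=
  Real.iSup_le (fun a => Real.sqrt_le_iff.2 ⟨hc, hU a⟩) hc

lemma sum_sq_le_rowTwoInf_sq [Finite α] (U : α → Fin r → ℝ) (a : α) :
    ∑ l, U a l ^ 2 ≤ rowTwoInf U ^ 2 :=
  (Real.sqrt_le_left (rowTwoInf_nonneg U)).1
    (le_ciSup (f := fun a => √(∑ l, U a l ^ 2)) (Set.finite_range _).bddAbove a)

lemma abs_le_rowTwoInf [Finite α] (U : α → Fin r → ℝ) (a : α) (l : Fin r) :
    |U a l| ≤ rowTwoInf U :=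
  abs_le_of_sq_le_sq ((Finset.single_le_sum (f := fun l => U a l ^ 2) (fun _ _ => sq_nonneg _)
    (Finset.mem_univ l)).trans (sum_sq_le_rowTwoInf_sq U a)) (rowTwoInf_nonneg U)

lemma expect_sum_sq_le_rowTwoInf_sq [Fintype α] (U : α → Fin r → ℝ) :
    𝔼 a, ∑ l, U a l ^ 2 ≤ rowTwoInf U ^ 2 := by
  cases isEmpty_or_nonempty α
  · simpa using sq_nonneg (rowTwoInf U)
  · exact Finset.expect_le Finset.univ_nonempty fun a _ => sum_sq_le_rowTwoInf_sq U a

lemma rowTwoInf_hadamard_le [Finite α] (U V : Matrix α (Fin r) ℝ) :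
    rowTwoInf (U ⊙ V) ≤ rowTwoInf U * rowTwoInf V := by
  refine rowTwoInf_le (mul_nonneg (rowTwoInf_nonneg U) (rowTwoInf_nonneg V)) fun a => ?_
  calc ∑ l, (U a l * V a l) ^ 2 ≤ ∑ l, U a l ^ 2 * rowTwoInf V ^ 2 := by
        refine Finset.sum_le_sum fun l _ => ?_
        rw [mul_pow]
        exact mul_le_mul_of_nonneg_left
          (sq_le_sq.2 ((abs_le_rowTwoInf V a l).trans (le_abs_self _))) (sq_nonneg _)
    _ = (∑ l, U a l ^ 2) * rowTwoInf V ^ 2 := by rw [Finset.sum_mul]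
    _ ≤ rowTwoInf U ^ 2 * rowTwoInf V ^ 2 := by
        gcongr
        exact sum_sq_le_rowTwoInf_sq U a
    _ = (rowTwoInf U * rowTwoInf V) ^ 2 := (mul_pow _ _ _).symm

lemma rowTwoInf_mul_le_of_mem_rowStochastic [Fintype α] [DecidableEq α] {P : Matrix α α ℝ}
    (hP : P ∈ Matrix.rowStochastic ℝ α) (U : Matrix α (Fin r) ℝ) :
    rowTwoInf (P * U) ≤ rowTwoInf U := by
  refine rowTwoInf_le (rowTwoInf_nonneg U) fun x => ?_
  calc ∑ l, (P * U) x l ^ 2 ≤ ∑ l, ∑ y, P x y * U y l ^ 2 :=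
        Finset.sum_le_sum fun l _ => Real.pow_arith_mean_le_arith_mean_pow_of_even _ _ _
          (fun _ _ => Matrix.nonneg_of_mem_rowStochastic hP)
          (Matrix.sum_row_of_mem_rowStochastic hP x) even_two
    _ = ∑ y, P x y * ∑ l, U y l ^ 2 := by
        rw [Finset.sum_comm]
        simp only [Finset.mul_sum]
    _ ≤ ∑ y, P x y * rowTwoInf U ^ 2 := Finset.sum_le_sum fun y _ =>
        mul_le_mul_of_nonneg_left (sum_sq_le_rowTwoInf_sq U y)
          (Matrix.nonneg_of_mem_rowStochastic hP)
    _ = rowTwoInf U ^ 2 := by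
        rw [← Finset.sum_mul, Matrix.sum_row_of_mem_rowStochastic hP, one_mul]

/-- The row-wise Kronecker (face-splitting) product of two factor matrices: row `a` is the Kronecker
product of the rows `U a` and `V a`, indexed through `finProdFinEquiv`. It turns factorizations of
two tensors into one of their entrywise product. -/
def rowKronecker (U : α → Fin r → ℝ) (V : α → Fin r' → ℝ) : α → Fin (r * r') → ℝ :=
  fun a l => U a (finProdFinEquiv.symm l).1 * V a (finProdFinEquiv.symm l).2

lemma rowTwoInf_rowKronecker_le [Finite α] (U : α → Fin r → ℝ) (V : α → Fin r' → ℝ) :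
    rowTwoInf (rowKronecker U V) ≤ rowTwoInf U * rowTwoInf V := by
  refine rowTwoInf_le (mul_nonneg (rowTwoInf_nonneg U) (rowTwoInf_nonneg V)) fun a => ?_
  calc ∑ l, rowKronecker U V a l ^ 2 = ∑ p : Fin r × Fin r', (U a p.1 * V a p.2) ^ 2 :=
        finProdFinEquiv.symm.sum_comp fun p : Fin r × Fin r' => (U a p.1 * V a p.2) ^ 2
    _ = (∑ l, U a l ^ 2) * ∑ l, V a l ^ 2 := by
        simp only [mul_pow, Fintype.sum_prod_type, Finset.sum_mul_sum]
    _ ≤ rowTwoInf U ^ 2 * rowTwoInf V ^ 2 :=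
        mul_le_mul (sum_sq_le_rowTwoInf_sq U a) (sum_sq_le_rowTwoInf_sq V a)
          (Finset.sum_nonneg fun _ _ => sq_nonneg _) (sq_nonneg _)
    _ = (rowTwoInf U * rowTwoInf V) ^ 2 := (mul_pow _ _ _).symm

lemma sum_prod_rowKronecker {ι : Type*} [Fintype ι] {β : ι → Type*} (U : ∀ i, β i → Fin r → ℝ)
    (V : ∀ i, β i → Fin r' → ℝ) (x : ∀ i, β i) :
    ∑ l, ∏ i, rowKronecker (U i) (V i) (x i) l =
      (∑ l, ∏ i, U i (x i) l) * ∑ l, ∏ i, V i (x i) l := by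
  rw [Finset.sum_mul_sum, ← Fintype.sum_prod_type', ← finProdFinEquiv.symm.sum_comp]
  simp only [rowKronecker, Finset.prod_mul_distrib]

end RowNorm

section MaxQuasinorm

variable {t : ℕ} {n : Fin t → ℕ}

lemma prod_rowTwoInf_nonneg {r : ℕ} (U : (i : Fin t) → Fin (n i) → Fin r → ℝ) :
    0 ≤ ∏ i, rowTwoInf (U i) :=
  Finset.prod_nonneg fun i _ => rowTwoInf_nonneg (U i)

lemma maxQnorm_nonneg (T : ((i : Fin t) → Fin (n i)) → ℝ) : 0 ≤ maxQnorm T :=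
  Real.sInf_nonneg <| by
    rintro _ ⟨r, U, -, rfl⟩
    exact prod_rowTwoInf_nonneg U

lemma maxQnorm_le_prod_rowTwoInf {T : ((i : Fin t) → Fin (n i)) → ℝ} {r : ℕ}
    (U : (i : Fin t) → Fin (n i) → Fin r → ℝ) (hU : ∀ x, T x = ∑ l, ∏ i, U i (x i) l) :
    maxQnorm T ≤ ∏ i, rowTwoInf (U i) := by
  refine csInf_le ⟨0, ?_⟩ ⟨r, U, hU, rfl⟩
  rintro _ ⟨r', V, -, rfl⟩
  exact prod_rowTwoInf_nonneg V

lemma exists_factorization [NeZero t] (T : ((i : Fin t) → Fin (n i)) → ℝ) :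
    ∃ (r : ℕ) (U : (i : Fin t) → Fin (n i) → Fin r → ℝ),
      ∀ x, T x = ∑ l : Fin r, ∏ i, U i (x i) l := by
  -- One rank-one term per entry; the entry itself is carried by the factor in position `0`.
  let e := Fintype.equivFin ((i : Fin t) → Fin (n i))
  refine ⟨_, fun i a l => (if e.symm l i = a then 1 else 0) *
    (if i = 0 then T (e.symm l) else 1), fun x => ?_⟩
  rw [← e.sum_comp]
  simp only [Equiv.symm_apply_apply, Finset.prod_ite_eq', Finset.mem_univ, if_true,
    Finset.prod_ite_zero, forall_const, ← funext_iff, ite_mul, one_mul, zero_mul,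
    Finset.sum_ite_eq']

lemma exists_factorization_lt [NeZero t] {T : ((i : Fin t) → Fin (n i)) → ℝ} {c : ℝ}
    (hc : maxQnorm T < c) :
    ∃ (r : ℕ) (U : (i : Fin t) → Fin (n i) → Fin r → ℝ),
      (∀ x, T x = ∑ l : Fin r, ∏ i, U i (x i) l) ∧ ∏ i, rowTwoInf (U i) < c := by
  obtain ⟨r, U, hU⟩ := exists_factorization T
  obtain ⟨_, ⟨r', U', hU', rfl⟩, hlt⟩ := exists_lt_of_csInf_lt (by exact ⟨_, r, U, hU, rfl⟩) hc
  exact ⟨r', U', hU', hlt⟩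

lemma le_mul_maxQnorm [NeZero t] {T : ((i : Fin t) → Fin (n i)) → ℝ} {b c : ℝ} (hc : 0 ≤ c)
    (h : ∀ (r : ℕ) (U : (i : Fin t) → Fin (n i) → Fin r → ℝ),
      (∀ x, T x = ∑ l, ∏ i, U i (x i) l) → b ≤ c * ∏ i, rowTwoInf (U i)) :
    b ≤ c * maxQnorm T := by
  refine le_mul_of_forall_lt₀ fun c' hc' m hm => ?_
  obtain ⟨r, U, hU, hlt⟩ := exists_factorization_lt hm
  exact (h r U hU).trans <|
    mul_le_mul hc'.le hlt.le (prod_rowTwoInf_nonneg U) (hc.trans hc'.le)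

lemma maxQnorm_mul_le [NeZero t] (S T : ((i : Fin t) → Fin (n i)) → ℝ) :
    maxQnorm (S * T) ≤ maxQnorm S * maxQnorm T := by
  refine le_mul_maxQnorm (maxQnorm_nonneg S) fun r V hV => ?_
  rw [mul_comm (maxQnorm S)]
  refine le_mul_maxQnorm (T := S) (prod_rowTwoInf_nonneg V) fun r' U hU => ?_
  calc maxQnorm (S * T) ≤ ∏ i, rowTwoInf (rowKronecker (U i) (V i)) :=
        maxQnorm_le_prod_rowTwoInf _ fun x => by
          rw [Pi.mul_apply, hU, hV, sum_prod_rowKronecker]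
    _ ≤ ∏ i, rowTwoInf (U i) * rowTwoInf (V i) :=
        Finset.prod_le_prod (fun _ _ => rowTwoInf_nonneg _)
          fun i _ => rowTwoInf_rowKronecker_le (U i) (V i)
    _ = (∏ i, rowTwoInf (V i)) * ∏ i, rowTwoInf (U i) := by
        rw [Finset.prod_mul_distrib, mul_comm]

end MaxQuasinorm

section WalkAverage

variable {α : Type*} {s : ℕ}

/-- The weight `∏ i, P (v i) (v (i + 1))` of a walk `v` with `s` steps. For a stochastic `P` it is
the probability that the Markov chain with kernel `P` follows `v` when started at `v 0`. -/
def walkWeight (P : Matrix α α ℝ) (v : Fin (s + 1) → α) : ℝ :=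
  ∏ i : Fin s, P (v i.castSucc) (v i.succ)

lemma walkWeight_cons (P : Matrix α α ℝ) (x : α) (v : Fin (s + 1) → α) :
    walkWeight P (Fin.cons x v : Fin (s + 2) → α) = P x (v 0) * walkWeight P v := by
  simp [walkWeight, Fin.prod_univ_succ (n := s)]

variable [Fintype α] {ι : Type*}

lemma sum_eq_sum_sum_cons (f : (Fin (s + 1) → α) → ℝ) :
    ∑ v, f v = ∑ x, ∑ w : Fin s → α, f (Fin.cons x w) := by
  rw [← (Fin.consEquiv fun _ : Fin (s + 1) => α).sum_comp, Fintype.sum_prod_type]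
  rfl

/-- The matrix whose entry at `(x, l)` is the average of `∏ i, U i (v i) l` over the walks `v`
started at `x`, weighted by `walkWeight P`. It is computed by first-step analysis;
`walkAverage_apply` is the explicit formula. -/
def walkAverage (P : Matrix α α ℝ) : {s : ℕ} → (Fin (s + 1) → Matrix α ι ℝ) → Matrix α ι ℝ
  | 0, U => U 0
  | _ + 1, U => U 0 ⊙ (P * walkAverage P (Fin.tail U))

lemma walkAverage_apply (P : Matrix α α ℝ) (U : Fin (s + 1) → Matrix α ι ℝ) (x : α) (l : ι) :
    walkAverage P U x l = ∑ w : Fin s → α,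
      walkWeight P (Fin.cons x w : Fin (s + 1) → α) *
        ∏ i, U i ((Fin.cons x w : Fin (s + 1) → α) i) l := by
  induction s generalizing x with
  | zero => simp [walkAverage, walkWeight]
  | succ s ih =>
    rw [walkAverage, Matrix.hadamard_apply, Matrix.mul_apply, sum_eq_sum_sum_cons, Finset.mul_sum]
    refine Finset.sum_congr rfl fun y _ => ?_
    rw [ih, Finset.mul_sum, Finset.mul_sum]
    refine Finset.sum_congr rfl fun w _ => ?_
    rw [walkWeight_cons, Fin.prod_univ_succ (n := s + 1)]
    simp only [Fin.cons_zero, Fin.cons_succ, Fin.tail]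
    ring

lemma sum_walkAverage (P : Matrix α α ℝ) (U : Fin (s + 1) → Matrix α ι ℝ) (l : ι) :
    ∑ x, walkAverage P U x l = ∑ v, walkWeight P v * ∏ i, U i (v i) l := by
  simp only [walkAverage_apply, sum_eq_sum_sum_cons fun _ : Fin (s + 1) → α => _]

lemma expect_prod_eq_prod_expect {κ : Type*} [Fintype κ] [DecidableEq κ] (f : κ → α → ℝ) :
    𝔼 v : κ → α, ∏ i, f i (v i) = ∏ i, 𝔼 x, f i x := by
  simp [Fintype.expect_eq_sum_div_card, Finset.prod_div_distrib, Fintype.prod_sum]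

variable [DecidableEq α] {P : Matrix α α ℝ}

lemma walkAverage_one (hP : P ∈ Matrix.rowStochastic ℝ α) (x : α) (l : ι) :
    walkAverage P (fun _ : Fin (s + 1) => Matrix.of 1) x l = 1 := by
  induction s generalizing x with
  | zero => simp [walkAverage]
  | succ s ih =>
    simpa [walkAverage, Fin.tail_def, Matrix.mul_apply, ih] using
      Matrix.sum_row_of_mem_rowStochastic hP x

lemma sum_walkWeight (hP : P ∈ Matrix.rowStochastic ℝ α) :
    ∑ v : Fin (s + 1) → α, walkWeight P v = Fintype.card α := by
  simpa [walkAverage_one hP] using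
    (sum_walkAverage P (fun _ : Fin (s + 1) => Matrix.of 1) ()).symm

lemma rowTwoInf_walkAverage_le {r : ℕ} (hP : P ∈ Matrix.rowStochastic ℝ α)
    (U : Fin (s + 1) → Matrix α (Fin r) ℝ) :
    rowTwoInf (walkAverage P U) ≤ ∏ i, rowTwoInf (U i) := by
  induction s with
  | zero => simp [walkAverage]
  | succ s ih =>
    calc rowTwoInf (walkAverage P U)
        ≤ rowTwoInf (U 0) * rowTwoInf (P * walkAverage P (Fin.tail U)) :=
          rowTwoInf_hadamard_le _ _
      _ ≤ rowTwoInf (U 0) * ∏ i, rowTwoInf (Fin.tail U i) :=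
          mul_le_mul_of_nonneg_left
            ((rowTwoInf_mul_le_of_mem_rowStochastic hP _).trans (ih _)) (rowTwoInf_nonneg _)
      _ = ∏ i, rowTwoInf (U i) := (Fin.prod_univ_succ fun i => rowTwoInf (U i)).symm

end WalkAverage

section Mixing

variable {α ι : Type*} [Fintype α]

/-- One step of the kernel `P` brings every function within `κ` times its root mean square of its
uniform average, in root mean square: the operator norm of `P - J`, with `J` the uniform averaging
operator, is at most `κ`. -/
def MixesAtRate (P : Matrix α α ℝ) (κ : ℝ) : Prop :=
  ∀ h : α → ℝ, 𝔼 x, ((P *ᵥ h) x - 𝔼 y, h y) ^ 2 ≤ κ ^ 2 * 𝔼 x, h x ^ 2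

lemma sum_abs_expect_mul_le [Fintype ι] {f g : α → ι → ℝ} {a b : ℝ} (ha : 0 ≤ a) (hb : 0 ≤ b)
    (hf : 𝔼 x, ∑ l, f x l ^ 2 ≤ a ^ 2) (hg : 𝔼 x, ∑ l, g x l ^ 2 ≤ b ^ 2) :
    ∑ l, |𝔼 x, f x l * g x l| ≤ a * b := by
  have expect_sq_nonneg (h : α → ι → ℝ) (l : ι) : 0 ≤ 𝔼 x, h x l ^ 2 :=
    Finset.expect_nonneg fun _ _ => sq_nonneg _
  rw [Finset.expect_sum_comm] at hf hg
  calc ∑ l, |𝔼 x, f x l * g x l| ≤ ∑ l, √(𝔼 x, f x l ^ 2) * √(𝔼 x, g x l ^ 2) := by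
        refine Finset.sum_le_sum fun l _ => ?_
        rw [← Real.sqrt_mul (expect_sq_nonneg f l)]
        exact Real.abs_le_sqrt (Finset.expect_mul_sq_le_sq_mul_sq _ _ _)
    _ ≤ √(∑ l, 𝔼 x, f x l ^ 2) * √(∑ l, 𝔼 x, g x l ^ 2) :=
        Real.sum_sqrt_mul_sqrt_le _ (expect_sq_nonneg f) (expect_sq_nonneg g)
    _ ≤ a * b := mul_le_mul (Real.sqrt_le_iff.2 ⟨ha, hf⟩) (Real.sqrt_le_iff.2 ⟨hb, hg⟩)
        (Real.sqrt_nonneg _) ha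

lemma abs_expect_le_rowTwoInf {r : ℕ} (U : α → Fin r → ℝ) (l : Fin r) :
    |𝔼 x, U x l| ≤ rowTwoInf U := by
  cases isEmpty_or_nonempty α
  · simpa using rowTwoInf_nonneg U
  · exact (Finset.abs_expect_le _ _).trans
      (Finset.expect_le Finset.univ_nonempty fun x _ => abs_le_rowTwoInf U x l)

namespace MixesAtRate

variable {P : Matrix α α ℝ} {κ : ℝ} {r s : ℕ}

lemma expect_sum_mul_sub_sq_le (hmix : MixesAtRate P κ) (F : Matrix α (Fin r) ℝ) :
    𝔼 x, ∑ l, ((P * F) x l - 𝔼 y, F y l) ^ 2 ≤ (κ * rowTwoInf F) ^ 2 := by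
  calc 𝔼 x, ∑ l, ((P * F) x l - 𝔼 y, F y l) ^ 2
      = ∑ l, 𝔼 x, ((P * F) x l - 𝔼 y, F y l) ^ 2 := Finset.expect_sum_comm _ _ _
    _ ≤ ∑ l, κ ^ 2 * 𝔼 x, F x l ^ 2 := Finset.sum_le_sum fun l _ => hmix fun y => F y l
    _ = κ ^ 2 * 𝔼 x, ∑ l, F x l ^ 2 := by rw [Finset.expect_sum_comm, Finset.mul_sum]
    _ ≤ κ ^ 2 * rowTwoInf F ^ 2 :=
        mul_le_mul_of_nonneg_left (expect_sum_sq_le_rowTwoInf_sq F) (sq_nonneg κ)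
    _ = (κ * rowTwoInf F) ^ 2 := (mul_pow _ _ _).symm

lemma sum_abs_expect_hadamard_sub_le (hmix : MixesAtRate P κ) (hκ : 0 ≤ κ)
    (U F : Matrix α (Fin r) ℝ) :
    ∑ l, |𝔼 x, (U ⊙ (P * F)) x l - (𝔼 x, U x l) * 𝔼 y, F y l| ≤
      κ * (rowTwoInf U * rowTwoInf F) := by
  calc ∑ l, |𝔼 x, (U ⊙ (P * F)) x l - (𝔼 x, U x l) * 𝔼 y, F y l|
      = ∑ l, |𝔼 x, U x l * ((P * F) x l - 𝔼 y, F y l)| := by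
        simp only [Matrix.hadamard_apply, mul_sub, Finset.expect_sub_distrib, Finset.expect_mul]
    _ ≤ rowTwoInf U * (κ * rowTwoInf F) :=
        sum_abs_expect_mul_le (rowTwoInf_nonneg U) (mul_nonneg hκ (rowTwoInf_nonneg F))
          (expect_sum_sq_le_rowTwoInf_sq U) (hmix.expect_sum_mul_sub_sq_le F)
    _ = κ * (rowTwoInf U * rowTwoInf F) := mul_left_comm _ _ _

variable [DecidableEq α]

lemma sum_abs_expect_walkAverage_sub_le (hmix : MixesAtRate P κ) (hκ : 0 ≤ κ)
    (hP : P ∈ Matrix.rowStochastic ℝ α) (U : Fin (s + 1) → Matrix α (Fin r) ℝ) :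
    ∑ l, |𝔼 x, walkAverage P U x l - ∏ i, 𝔼 x, U i x l| ≤ s * κ * ∏ i, rowTwoInf (U i) := by
  induction s with
  | zero => simp [walkAverage]
  | succ s ih =>
    set F := walkAverage P (Fin.tail U) with hF
    set ρ := ∏ i, rowTwoInf (Fin.tail U i) with hρ
    have hFρ : rowTwoInf F ≤ ρ := rowTwoInf_walkAverage_le hP _
    have first_step (l : Fin r) :
        𝔼 x, walkAverage P U x l - ∏ i, 𝔼 x, U i x l =
          (𝔼 x, (U 0 ⊙ (P * F)) x l - (𝔼 x, U 0 x l) * 𝔼 y, F y l) +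
            (𝔼 x, U 0 x l) * (𝔼 y, F y l - ∏ i, 𝔼 x, Fin.tail U i x l) := by
      rw [walkAverage, ← hF, Fin.prod_univ_succ]
      simp only [Fin.tail]
      ring
    calc ∑ l, |𝔼 x, walkAverage P U x l - ∏ i, 𝔼 x, U i x l|
        ≤ ∑ l, (|𝔼 x, (U 0 ⊙ (P * F)) x l - (𝔼 x, U 0 x l) * 𝔼 y, F y l| +
            rowTwoInf (U 0) * |𝔼 y, F y l - ∏ i, 𝔼 x, Fin.tail U i x l|) := by
          refine Finset.sum_le_sum fun l _ => ?_
          rw [first_step]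
          refine (abs_add_le _ _).trans ?_
          rw [abs_mul]
          gcongr
          exact abs_expect_le_rowTwoInf (U 0) l
      _ ≤ κ * (rowTwoInf (U 0) * ρ) + rowTwoInf (U 0) * (s * κ * ρ) := by
          rw [Finset.sum_add_distrib, ← Finset.mul_sum]
          have hU₀ := rowTwoInf_nonneg (U 0)
          refine add_le_add ((hmix.sum_abs_expect_hadamard_sub_le hκ _ _).trans ?_) ?_
          · gcongr
          · exact mul_le_mul_of_nonneg_left (ih _) hU₀
      _ = (s + 1 : ℕ) * κ * ∏ i, rowTwoInf (U i) := by
          rw [Fin.prod_univ_succ, hρ]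
          simp only [Fin.tail]
          push_cast
          ring

lemma abs_sum_walkWeight_mul_sub_expect_le {n : ℕ} {P : Matrix (Fin n) (Fin n) ℝ}
    (hmix : MixesAtRate P κ) (hκ : 0 ≤ κ) (hP : P ∈ Matrix.rowStochastic ℝ (Fin n))
    (A : (Fin (s + 1) → Fin n) → ℝ) :
    |(∑ v, walkWeight P v * A v) / n - 𝔼 v, A v| ≤ s * κ * maxQnorm (n := fun _ => n) A := by
  refine le_mul_maxQnorm (by positivity) fun r U hU => ?_
  have walk_mean : (∑ v, walkWeight P v * A v) / n = ∑ l, 𝔼 x, walkAverage P U x l := by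
    have := sum_walkAverage P U
    simp only [hU, Fintype.expect_eq_sum_div_card, this, Finset.mul_sum,
      Fintype.card_fin, ← Finset.sum_div]
    rw [Finset.sum_comm]
  have uniform_mean : 𝔼 v, A v = ∑ l, ∏ i, 𝔼 x, U i x l := by
    simp only [hU, Finset.expect_sum_comm]
    exact Finset.sum_congr rfl fun l _ => expect_prod_eq_prod_expect fun i x => U i x l
  rw [walk_mean, uniform_mean, ← Finset.sum_sub_distrib]
  exact (Finset.abs_sum_le_sum_abs _ _).trans (hmix.sum_abs_expect_walkAverage_sub_le hκ hP U)

end MixesAtRate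

end Mixing

lemma expect_balance_sq_le {ι : Type*} [Fintype ι] (h : ι → ℝ) :
    𝔼 x, Fintype.balance h x ^ 2 ≤ 𝔼 x, h x ^ 2 := by
  cases isEmpty_or_nonempty ι
  · simp
  · have variance : 𝔼 x, Fintype.balance h x ^ 2 = 𝔼 x, h x ^ 2 - (𝔼 x, h x) ^ 2 := by
      simp only [Fintype.balance_apply, sub_sq, Finset.expect_add_distrib,
        Finset.expect_sub_distrib, ← Finset.mul_expect, ← Finset.expect_mul, Fintype.expect_const]
      ring
    linarith [sq_nonneg (𝔼 x, h x)]

section RegularGraph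

variable {V : Type*} [Fintype V] (G : SimpleGraph V) [DecidableRel G.Adj] {d : ℕ}

/-- The transition matrix `A / d` of the simple random walk on a `d`-regular graph with adjacency
matrix `A`. -/
noncomputable def walkKernel (d : ℕ) : Matrix V V ℝ :=
  (d : ℝ)⁻¹ • G.adjMatrix ℝ

variable {G}

lemma walkKernel_mulVec_balance (hd : 0 < d) (hreg : G.IsRegularOfDegree d) (h : V → ℝ) (x : V) :
    (walkKernel G d *ᵥ h) x - 𝔼 y, h y =
      (d : ℝ)⁻¹ * (G.adjMatrix ℝ *ᵥ Fintype.balance h) x := by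
  have hd' : (d : ℝ) ≠ 0 := by exact_mod_cast hd.ne'
  rw [walkKernel, Matrix.smul_mulVec, Fintype.balance, Matrix.mulVec_sub, Pi.smul_apply,
    Pi.sub_apply, G.adjMatrix_mulVec_const_apply_of_regular hreg, smul_eq_mul]
  field_simp

lemma mixesAtRate_walkKernel (hd : 0 < d) (hreg : G.IsRegularOfDegree d) {lam : ℝ}
    (hlam : ∀ u : V → ℝ, ∑ i, u i = 0 →
      ∑ j, (G.adjMatrix ℝ *ᵥ u) j ^ 2 ≤ lam ^ 2 * ∑ i, u i ^ 2) :
    MixesAtRate (walkKernel G d) (lam / d) := by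
  intro h
  calc 𝔼 x, ((walkKernel G d *ᵥ h) x - 𝔼 y, h y) ^ 2
      = (d : ℝ)⁻¹ ^ 2 * 𝔼 x, (G.adjMatrix ℝ *ᵥ Fintype.balance h) x ^ 2 := by
        simp only [walkKernel_mulVec_balance hd hreg, mul_pow, ← Finset.mul_expect]
    _ ≤ (d : ℝ)⁻¹ ^ 2 * (lam ^ 2 * 𝔼 x, Fintype.balance h x ^ 2) := by
        simp only [Fintype.expect_eq_sum_div_card, ← mul_div_assoc]
        gcongr
        exact hlam _ (Fintype.sum_balance h)
    _ ≤ (d : ℝ)⁻¹ ^ 2 * (lam ^ 2 * 𝔼 x, h x ^ 2) := by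
        have := expect_balance_sq_le h
        gcongr
    _ = (lam / d) ^ 2 * 𝔼 x, h x ^ 2 := by
        rw [div_eq_inv_mul, mul_pow, mul_assoc]

lemma walkKernel_mem_rowStochastic [DecidableEq V] (hd : 0 < d) (hreg : G.IsRegularOfDegree d) :
    walkKernel G d ∈ Matrix.rowStochastic ℝ V := by
  have hd' : (d : ℝ) ≠ 0 := by exact_mod_cast hd.ne'
  refine Matrix.mem_rowStochastic.2 ⟨fun x y => ?_, funext fun x => ?_⟩
  · rw [walkKernel, Matrix.smul_apply, SimpleGraph.adjMatrix_apply]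
    positivity
  · rw [walkKernel, Matrix.smul_mulVec, Pi.smul_apply,
      show (1 : V → ℝ) = Function.const V 1 from rfl,
      G.adjMatrix_mulVec_const_apply_of_regular hreg]
    simp [hd']

end RegularGraph

section WalkHypergraph

variable {n d s : ℕ} {G : SimpleGraph (Fin n)}

lemma walkEdge_iff {v : Fin (s + 1) → Fin n} :
    walkEdge G v ↔ ∀ i : Fin s, G.Adj (v i.castSucc) (v i.succ) :=
  Iff.rfl

variable [DecidableRel G.Adj]

lemma walkWeight_walkKernel (v : Fin (s + 1) → Fin n) :
    walkWeight (walkKernel G d) v = if walkEdge G v then ((d : ℝ) ^ s)⁻¹ else 0 := by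
  simp only [walkWeight, walkKernel, Matrix.smul_apply, SimpleGraph.adjMatrix_apply, smul_eq_mul,
    Finset.prod_mul_distrib, Finset.prod_ite_zero, Finset.mem_univ, true_implies, walkEdge_iff]
  split_ifs <;> simp

lemma sum_walkWeight_walkKernel_mul (A : (Fin (s + 1) → Fin n) → ℝ) :
    ∑ v, walkWeight (walkKernel G d) v * A v = (∑ e with walkEdge G e, A e) / (d : ℝ) ^ s := by
  simp only [walkWeight_walkKernel, ite_mul, zero_mul, ← Finset.sum_filter, ← Finset.mul_sum]
  rw [inv_mul_eq_div]

lemma card_walkEdge (hd : 0 < d) (hreg : G.IsRegularOfDegree d) :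
    (Finset.card {e : Fin (s + 1) → Fin n | walkEdge G e} : ℝ) = n * (d : ℝ) ^ s := by
  have hd' : (d : ℝ) ^ s ≠ 0 := by positivity
  have h := sum_walkWeight (s := s) (walkKernel_mem_rowStochastic hd hreg)
  have h' := sum_walkWeight_walkKernel_mul (G := G) (d := d) (s := s) fun _ => 1
  simp only [mul_one, h, Fintype.card_fin, Finset.sum_const, nsmul_eq_mul] at h'
  rw [h', div_mul_cancel₀ _ hd']

lemma expect_walkEdge (hd : 0 < d) (hreg : G.IsRegularOfDegree d)
    (A : (Fin (s + 1) → Fin n) → ℝ) :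
    𝔼 e with walkEdge G e, A e = (∑ v, walkWeight (walkKernel G d) v * A v) / n := by
  rw [Finset.expect_eq_sum_div_card, card_walkEdge hd hreg, sum_walkWeight_walkKernel_mul,
    div_div, mul_comm]

variable {lam : ℝ}

theorem abs_expect_walkEdge_sub_expect_le (hd : 0 < d) (hreg : G.IsRegularOfDegree d)
    (hlam₀ : 0 ≤ lam) (hlam : ∀ u : Fin n → ℝ, ∑ i, u i = 0 →
      ∑ j, (G.adjMatrix ℝ *ᵥ u) j ^ 2 ≤ lam ^ 2 * ∑ i, u i ^ 2)
    (A : (Fin (s + 1) → Fin n) → ℝ) :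
    |𝔼 e with walkEdge G e, A e - 𝔼 e, A e| ≤ s * (lam / d) * maxQnorm (n := fun _ => n) A := by
  rw [expect_walkEdge hd hreg]
  exact (mixesAtRate_walkKernel hd hreg hlam).abs_sum_walkWeight_mul_sub_expect_le
    (by positivity) (walkKernel_mem_rowStochastic hd hreg) A

theorem abs_expect_walkEdge_sq_sub_expect_sq_le (hd : 0 < d) (hreg : G.IsRegularOfDegree d)
    (hlam₀ : 0 ≤ lam) (hlam : ∀ u : Fin n → ℝ, ∑ i, u i = 0 →
      ∑ j, (G.adjMatrix ℝ *ᵥ u) j ^ 2 ≤ lam ^ 2 * ∑ i, u i ^ 2)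
    (S T : (Fin (s + 1) → Fin n) → ℝ) :
    |𝔼 e with walkEdge G e, (S e - T e) ^ 2 - 𝔼 e, (S e - T e) ^ 2| ≤
      s * (lam / d) * (maxQnorm (n := fun _ => n) S + maxQnorm (n := fun _ => n) T) ^ 2 := by
  set D : ((Fin (s + 1) → Fin n) → ℝ) → ℝ :=
    fun A => 𝔼 e with walkEdge G e, A e - 𝔼 e, A e with hD
  have deviation_mul (A B : (Fin (s + 1) → Fin n) → ℝ) :
      |D (A * B)| ≤ s * (lam / d) * (maxQnorm (n := fun _ => n) A * maxQnorm (n := fun _ => n) B) :=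
    (abs_expect_walkEdge_sub_expect_le hd hreg hlam₀ hlam (A * B)).trans <|
      mul_le_mul_of_nonneg_left (maxQnorm_mul_le A B) (by positivity)
  have expansion : 𝔼 e with walkEdge G e, (S e - T e) ^ 2 - 𝔼 e, (S e - T e) ^ 2 =
      D (S * S) - 2 * D (S * T) + D (T * T) := by
    have square_sub (a b : ℝ) : (a - b) ^ 2 = a * a - 2 * (a * b) + b * b := by ring
    simp only [hD, Pi.mul_apply, square_sub, Finset.expect_add_distrib,
      Finset.expect_sub_distrib, ← Finset.mul_expect]
    ring
  rw [expansion, abs_le]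
  have hSS := abs_le.1 (deviation_mul S S)
  have hST := abs_le.1 (deviation_mul S T)
  have hTT := abs_le.1 (deviation_mul T T)
  constructor <;> linarith

end WalkHypergraph

lemma expect_sub_sq_le_of_noise {ι : Type*} {E : Finset ι} {S T Z ν : ι → ℝ} {δ : ℝ}
    (hobs : ∀ e ∈ E, Z e = T e + ν e) (hν : 𝔼 e ∈ E, ν e ^ 2 ≤ δ ^ 2)
    (hfit : 𝔼 e ∈ E, (S e - Z e) ^ 2 ≤ δ ^ 2) :
    𝔼 e ∈ E, (S e - T e) ^ 2 ≤ 4 * δ ^ 2 := by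
  calc 𝔼 e ∈ E, (S e - T e) ^ 2 ≤ 𝔼 e ∈ E, 2 * ((S e - Z e) ^ 2 + ν e ^ 2) := by
        refine Finset.expect_le_expect fun e he => ?_
        rw [show S e - T e = (S e - Z e) + ν e by rw [hobs e he]; ring]
        exact add_sq_le
    _ = 2 * (𝔼 e ∈ E, (S e - Z e) ^ 2 + 𝔼 e ∈ E, ν e ^ 2) := by
        rw [← Finset.mul_expect, Finset.expect_add_distrib]
    _ ≤ 4 * δ ^ 2 := by linarith

lemma one_div_card_mul_sum_eq_expect {ι : Type*} (E : Finset ι) (f : ι → ℝ) :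
    1 / (E.card : ℝ) * ∑ e ∈ E, f e = 𝔼 e ∈ E, f e := by
  rw [one_div_mul_eq_div, Finset.expect_eq_sum_div_card]

theorem tensor_completion_noisy_general {t n d : ℕ} (ht : 0 < t) (hd : 0 < d)
    {G : SimpleGraph (Fin n)} [DecidableRel G.Adj] (hreg : G.IsRegularOfDegree d)
    {lam : ℝ} (hlam₀ : 0 ≤ lam)
    (hlam : ∀ u : Fin n → ℝ, ∑ i, u i = 0 →
      ∑ j, (G.adjMatrix ℝ *ᵥ u) j ^ 2 ≤ lam ^ 2 * ∑ i, u i ^ 2)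
    {T Z ν That : (Fin t → Fin n) → ℝ} {δ : ℝ}
    (hobs : ∀ e : Fin t → Fin n, walkEdge G e → Z e = T e + ν e)
    (hν : 1 / (Finset.card {e : Fin t → Fin n | walkEdge G e} : ℝ) *
      ∑ e with walkEdge G e, ν e ^ 2 ≤ δ ^ 2)
    (hfit : 1 / (Finset.card {e : Fin t → Fin n | walkEdge G e} : ℝ) *
      ∑ e with walkEdge G e, (That e - Z e) ^ 2 ≤ δ ^ 2)
    (hmin : maxQnorm (n := fun _ => n) That ≤ maxQnorm (n := fun _ => n) T) :
    1 / (n : ℝ) ^ t * ∑ e, (That e - T e) ^ 2 ≤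
      4 * ((t : ℝ) - 1) * maxQnorm (n := fun _ => n) T ^ 2 * (lam / d) + 4 * δ ^ 2 := by
  have hcard : (n : ℝ) ^ t = (Finset.univ : Finset (Fin t → Fin n)).card := by simp
  rw [hcard]
  simp only [one_div_card_mul_sum_eq_expect] at hν hfit ⊢
  obtain ⟨s, rfl⟩ := Nat.exists_eq_add_one.2 ht
  have transfer := (abs_le.1
    (abs_expect_walkEdge_sq_sub_expect_sq_le hd hreg hlam₀ hlam That T)).1
  have observed := expect_sub_sq_le_of_noise (fun e he => hobs e (Finset.mem_filter.1 he).2) hν hfit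
  have norms : (maxQnorm (n := fun _ => n) That + maxQnorm (n := fun _ => n) T) ^ 2 ≤
      4 * maxQnorm (n := fun _ => n) T ^ 2 := by
    nlinarith [maxQnorm_nonneg (n := fun _ => n) That, maxQnorm_nonneg (n := fun _ => n) T]
  have scaled := mul_le_mul_of_nonneg_left norms (show 0 ≤ s * (lam / d) by positivity)
  push_cast
  linarith

lemma four_mul_sub_one_le {t : ℕ} (ht : 2 ≤ t) :
    4 * ((t : ℝ) - 1) ≤ 2 ^ t * (2 * (t : ℝ) - 3) * 1.783 ^ (t - 1) := by
  have ht' : (2 : ℝ) ≤ t := by exact_mod_cast ht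
  have two_pow : (4 : ℝ) ≤ 2 ^ t := by
    linarith [pow_le_pow_right₀ (one_le_two (α := ℝ)) ht]
  calc 4 * ((t : ℝ) - 1) ≤ 2 ^ t * (2 * (t : ℝ) - 3) :=
        mul_le_mul two_pow (by linarith) (by linarith) (by positivity)
    _ ≤ 2 ^ t * (2 * (t : ℝ) - 3) * 1.783 ^ (t - 1) :=
        le_mul_of_one_le_right (mul_nonneg (by positivity) (by linarith))
          (one_le_pow₀ (by norm_num))

/-- Tensor completion with erroneous observations sampled along the walk
hypergraph of a `d`-regular expander graph: any max-quasinorm minimizer of the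
`δ`-relaxed data-fit problem recovers `T` up to an additional `4δ²` error. -/
theorem tensor_completion_noisy (t n d : ℕ) (ht : 2 ≤ t)
    (G : SimpleGraph (Fin n)) [DecidableRel G.Adj]
    (hconn : G.Connected) (hreg : G.IsRegularOfDegree d)
    (lam : ℝ) (hlam0 : 0 < lam) (hlamd : lam < d)
    (hlam : ∀ u : Fin n → ℝ, ∑ i, u i = 0 →
      ∑ j, ((G.adjMatrix ℝ).mulVec u j) ^ 2 ≤ lam ^ 2 * ∑ i, (u i) ^ 2)
    (T Z ν That : (Fin t → Fin n) → ℝ) (δ : ℝ)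
    -- observations corrupted by errors:
    (hobs : ∀ e : Fin t → Fin n, walkEdge G e → Z e = T e + ν e)
    -- bounded mean squared error of the corruption:
    (hν : (1 / ((Finset.univ.filter (fun e : Fin t → Fin n => walkEdge G e)).card : ℝ)) *
        ∑ e ∈ Finset.univ.filter (fun e : Fin t → Fin n => walkEdge G e), (ν e) ^ 2 ≤ δ ^ 2)
    -- `That` satisfies the root-mean-square data-fit constraint:
    (hfit : (1 / ((Finset.univ.filter (fun e : Fin t → Fin n => walkEdge G e)).card : ℝ)) *
        ∑ e ∈ Finset.univ.filter (fun e : Fin t → Fin n => walkEdge G e),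
          (That e - Z e) ^ 2 ≤ δ ^ 2)
    -- `That` has minimal max-quasinorm (note `T` itself is feasible):
    (hmin : maxQnorm (n := fun _ => n) That ≤ maxQnorm (n := fun _ => n) T) :
    (1 / (n : ℝ) ^ t) * ∑ x : Fin t → Fin n, (That x - T x) ^ 2 ≤
      2 ^ t * (2 * (t : ℝ) - 3) * 1.783 ^ (t - 1) *
        (maxQnorm (n := fun _ => n) T) ^ 2 * (lam / d) + 4 * δ ^ 2 := by
  have hd : 0 < d := by exact_mod_cast hlam0.trans hlamd
  refine (tensor_completion_noisy_general (by omega) hd hreg hlam0.le hlam hobs hν hfit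
    hmin).trans ?_
  gcongr ?_ * _ * _ + _
  exact four_mul_sub_one_le ht
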